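/- Let Φ̊ be an irreducible root system in V and (Λ_α) an untwisted extension datum of type (Φ̊, Y), i.e. Λ_α equals one fixed subset Λ ⊆ Y for every α ∈ Φ̊, and let Φ^re be the associated set of real roots. If Ψ is a closed subroot system of Φ^re, then Gr(Ψ) is a closed subroot system of Φ̊, and for any two roots α, β lying in the same irreducible component of Gr(Ψ), the set Z_α(Ψ) is a translate of Z_β(Ψ). If moreover Ψ is a maximal closed subroot system of Φ^re, then Gr(Ψ) is not properly contained in any proper closed subroot system of Φ̊ (so Gr(Ψ) is either all of Φ̊ or a maximal closed subroot system of Φ̊). -/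

import Mathlib

open scoped RealInnerProductSpace Pointwise

noncomputable section

namespace BdS

variable {V Y : Type*} [NormedAddCommGroup V] [InnerProductSpace ℝ V]
variable [AddCommGroup Y] [Module ℝ Y]

/-- `pairing β α = (β, α∨) = 2(β,α)/(α,α)`. -/
def pairing (β α : V) : ℝ := 2 * ⟪β, α⟫ / ⟪α, α⟫

/-- `reflRoot α v = s_α(v) = v − (v, α∨)α`. -/
def reflRoot (α v : V) : V := v - pairing v α • α

/-- A (finite) root system in `V`. -/
def IsRootSystem (Φ : Set V) : Prop :=
  Φ.Finite ∧ (0 : V) ∉ Φ ∧ Submodule.span ℝ Φ = ⊤ ∧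
    (∀ α ∈ Φ, ∀ β ∈ Φ, reflRoot α β ∈ Φ) ∧
    ∀ α ∈ Φ, ∀ β ∈ Φ, ∃ m : ℤ, pairing β α = (m : ℝ)

def IsReduced (Φ : Set V) : Prop :=
  ∀ α ∈ Φ, ∀ c : ℝ, c • α ∈ Φ → c • α = α ∨ c • α = -α

def IsIrreducible (Φ : Set V) : Prop :=
  ∀ Φ₁ Φ₂ : Set V, Φ = Φ₁ ∪ Φ₂ → (∀ x ∈ Φ₁, ∀ y ∈ Φ₂, ⟪x, y⟫ = 0) →
    Φ₁ = ∅ ∨ Φ₂ = ∅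

/-- divisible roots -/
def divSet (Φ : Set V) : Set V := {α ∈ Φ | (2:ℝ)⁻¹ • α ∈ Φ}
/-- non-divisible roots -/
def ndSet (Φ : Set V) : Set V := Φ \ divSet Φ
/-- short roots: non-divisible roots of non-maximal squared length -/
def shortSet (Φ : Set V) : Set V := {α ∈ ndSet Φ | ∃ β ∈ ndSet Φ, ⟪α, α⟫ < ⟪β, β⟫}
/-- long roots -/
def longSet (Φ : Set V) : Set V := ndSet Φ \ shortSet Φ

/-- An extension datum of type `(Φ, Y)`. -/
def IsExtensionDatum (Φ : Set V) (Λ : V → Set Y) : Prop :=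
  (∀ α ∈ Φ, ∀ β ∈ Φ, ∀ z ∈ Λ α, ∀ y ∈ Λ β, y - pairing β α • z ∈ Λ (reflRoot α β)) ∧
  (0 : Y) ∈ Λ 0 ∧
  (∀ α ∈ ndSet Φ, (0 : Y) ∈ Λ α) ∧
  (∀ α ∈ divSet Φ, (Λ α).Nonempty) ∧
  Submodule.span ℝ (⋃ α ∈ insert (0 : V) Φ, Λ α) = ⊤

/-- subroot system of a finite root system -/
def IsSubRS (Φ Δ : Set V) : Prop :=
  Δ.Nonempty ∧ Δ ⊆ Φ ∧ ∀ α ∈ Δ, ∀ β ∈ Δ, reflRoot α β ∈ Δ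

def IsClosedSubRS (Φ Δ : Set V) : Prop :=
  IsSubRS Φ Δ ∧ ∀ α ∈ Δ, ∀ β ∈ Δ, α + β ∈ Φ → α + β ∈ Δ

def IsMaxClosedSubRS (Φ Δ : Set V) : Prop :=
  IsClosedSubRS Φ Δ ∧ Δ ≠ Φ ∧
    ∀ Δ' : Set V, IsClosedSubRS Φ Δ' → Δ' ≠ Φ → Δ ⊆ Δ' → Δ' = Δ

/-- semi-closed subroot system, relative to given short/long/divisible parts -/
def IsSemiClosedSubRS (Φ Φs Φl Φd Δ : Set V) : Prop :=
  IsSubRS Φ Δ ∧ ¬ (∀ α ∈ Δ, ∀ β ∈ Δ, α + β ∈ Φ → α + β ∈ Δ) ∧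
    ∀ α ∈ Δ, ∀ β ∈ Δ, α + β ∈ Φ → α + β ∉ Δ →
      (α ∈ Φs ∧ β ∈ Φs ∧ α + β ∈ Φl ∪ Φd) ∨ (α ∈ Φl ∧ β ∈ Φl ∧ α + β ∈ Φd)

def IsMaxSemiClosedSubRS (Φ Φs Φl Φd Δ : Set V) : Prop :=
  IsSemiClosedSubRS Φ Φs Φl Φd Δ ∧
    ∀ Δ' : Set V, IsClosedSubRS Φ Δ' → Δ' ≠ Φ → ¬ Δ ⊂ Δ'

/-- the set of real roots attached to an extension datum -/
def PhiRe (Φ : Set V) (Λ : V → Set Y) : Set (V × Y) := {x | x.1 ∈ Φ ∧ x.2 ∈ Λ x.1}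

/-- affine reflection `s_{α ⊕ y}(β ⊕ z) = s_α(β) ⊕ (z − (β,α∨)y)` -/
def reflAff (a x : V × Y) : V × Y := (reflRoot a.1 x.1, x.2 - pairing x.1 a.1 • a.2)

/-- subroot system of a set of real roots `R` -/
def IsSubSys (R Ψ : Set (V × Y)) : Prop :=
  Ψ.Nonempty ∧ Ψ ⊆ R ∧ Ψ ≠ R ∧ ∀ a ∈ Ψ, ∀ x ∈ Ψ, reflAff a x ∈ Ψ

def IsClosedSubSys (R Ψ : Set (V × Y)) : Prop :=
  IsSubSys R Ψ ∧ ∀ x ∈ Ψ, ∀ y ∈ Ψ, x + y ∈ R → x + y ∈ Ψ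

def IsMaxClosedSubSys (R Ψ : Set (V × Y)) : Prop :=
  IsClosedSubSys R Ψ ∧ ∀ Ψ' : Set (V × Y), IsClosedSubSys R Ψ' → Ψ ⊆ Ψ' → Ψ' = Ψ

/-- gradient of a subroot system -/
def Gr (Ψ : Set (V × Y)) : Set V := {α | ∃ y : Y, (α, y) ∈ Ψ}

def Zset (Ψ : Set (V × Y)) (α : V) : Set Y := {y | (α, y) ∈ Ψ}

abbrev E (n : ℕ) := EuclideanSpace ℝ (Fin n)

def eps {n : ℕ} (i : Fin n) : E n := EuclideanSpace.single i 1

def shortBC (n : ℕ) : Set (E n) := {v | ∃ i : Fin n, v = eps i ∨ v = -eps i}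

def longBC (n : ℕ) : Set (E n) :=
  {v | ∃ i j : Fin n, i ≠ j ∧ ∃ c d : ℝ, (c = 1 ∨ c = -1) ∧ (d = 1 ∨ d = -1) ∧
    v = c • eps i + d • eps j}

def divBC (n : ℕ) : Set (E n) :=
  {v | ∃ i : Fin n, v = (2:ℝ) • eps i ∨ v = -((2:ℝ) • eps i)}

def BCn (n : ℕ) : Set (E n) := shortBC n ∪ longBC n ∪ divBC n
def Bn (n : ℕ) : Set (E n) := shortBC n ∪ longBC n
def Cn (n : ℕ) : Set (E n) := longBC n ∪ divBC n

/-- two roots lie in the same irreducible component of `Δ`: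
joined by a chain of pairwise non-orthogonal roots of `Δ`. -/
def SameComp {V : Type*} [NormedAddCommGroup V] [InnerProductSpace ℝ V]
    (Δ : Set V) (α β : V) : Prop :=
  Relation.ReflTransGen (fun x y => x ∈ Δ ∧ y ∈ Δ ∧ ⟪x, y⟫ ≠ 0) α β

/-!
Two integrality observations drive everything. If `α`, `γ` are roots with `‖α‖ ≤ ‖γ‖` and
`α + γ ≠ 0`, then `(α, γ∨) > -2`, so `(α, γ∨) = -1` as soon as it is negative. First, this makes
the sum of two roots at an obtuse angle a root. Second, if `α`, `β` and `α + β` are roots,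
then applying this to the longest of the three vectors `α`, `β`, `-(α + β)` of sum zero produces a
pairing equal to `-1`, so that the common value `Λ₀` of an untwisted extension datum is closed
under addition.

Hence sums of elements of `Ψ` whose gradients add up to a root stay in `Ψ`, and for `α`, `β` and
`α + β` in the gradient, both `Z_α` and `Z_β` are translates of `Z_{α + β}`. Together with
`Z_{-α} = Z_α - 2y` for `y ∈ Z_α`, this compares `Z_α` and `Z_β` for any non-orthogonal `α`, `β`.
Finally a proper closed `Δ ⊆ Φ` lifts to the proper closed subroot system `Δ × Λ₀`,
which contains `Ψ` as soon as `Δ` contains the gradient of `Ψ`.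
-/

section Reflections

lemma pairing_self {α : V} (hα : α ≠ 0) : pairing α α = 2 :=
  mul_div_cancel_right₀ _ (inner_self_ne_zero.mpr hα)

lemma pairing_add (β γ α : V) : pairing (β + γ) α = pairing β α + pairing γ α := by
  simp only [pairing, inner_add_left]
  ring

lemma pairing_smul (c : ℝ) (β α : V) : pairing (c • β) α = c * pairing β α := by
  simp only [pairing, real_inner_smul_left]
  ring

lemma pairing_neg (β α : V) : pairing (-β) α = -pairing β α := by
  simpa using pairing_smul (-1) β α

lemma pairing_lt_zero_iff {α β : V} (hα : α ≠ 0) : pairing β α < 0 ↔ ⟪β, α⟫ < 0 := by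
  rw [pairing, div_lt_iff₀ (real_inner_self_pos.mpr hα), zero_mul]
  constructor <;> intro h <;> linarith

lemma neg_two_lt_pairing {α γ : V} (hγ : γ ≠ 0) (hle : ‖α‖ ≤ ‖γ‖) (hne : α + γ ≠ 0) :
    -2 < pairing α γ := by
  have hγ_pos : 0 < ⟪γ, γ⟫ := real_inner_self_pos.mpr hγ
  have hsum_pos : 0 < ⟪α, α⟫ + 2 * ⟪α, γ⟫ + ⟪γ, γ⟫ := by
    rw [← real_inner_add_add_self]
    exact real_inner_self_pos.mpr hne
  have hsq : ⟪α, α⟫ ≤ ⟪γ, γ⟫ := by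
    rw [real_inner_self_eq_norm_sq, real_inner_self_eq_norm_sq]
    gcongr
  rw [pairing, lt_div_iff₀ hγ_pos]
  linarith

lemma reflRoot_self {α : V} (hα : α ≠ 0) : reflRoot α α = -α := by
  rw [reflRoot, pairing_self hα]
  module

lemma reflRoot_of_pairing_eq_neg_one {α β : V} (h : pairing β α = -1) :
    reflRoot α β = α + β := by
  rw [reflRoot, h]
  module

lemma pairing_reflRoot {α : V} (hα : α ≠ 0) (β : V) :
    pairing (reflRoot α β) α = -pairing β α := by
  rw [reflRoot, sub_eq_add_neg, pairing_add, pairing_neg, pairing_smul, pairing_self hα]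
  ring

lemma reflAff_involutive {a : V × Y} (ha : a.1 ≠ 0) : Function.Involutive (reflAff a) := by
  intro x
  ext
  · simp only [reflAff]
    rw [reflRoot, pairing_reflRoot ha, reflRoot]
    module
  · simp only [reflAff, pairing_reflRoot ha]
    module

end Reflections

/-- A locally finite root system in the sense of Loos and Neher, except that `Φ` need not span `V`.
Local finiteness is automatic: a root in the span of finitely many roots is determined by its
pairings with these, and pairings of roots are integers in `[-4, 4]`. -/
structure IsLocallyFiniteRootSystem (Φ : Set V) : Prop where
  zero_notMem : (0 : V) ∉ Φ
  reflRoot_mem : ∀ α ∈ Φ, ∀ β ∈ Φ, reflRoot α β ∈ Φ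
  exists_pairing_eq_intCast : ∀ α ∈ Φ, ∀ β ∈ Φ, ∃ m : ℤ, pairing β α = m

lemma IsRootSystem.isLocallyFiniteRootSystem {Φ : Set V} (hΦ : IsRootSystem Φ) :
    IsLocallyFiniteRootSystem Φ :=
  ⟨hΦ.2.1, hΦ.2.2.2.1, hΦ.2.2.2.2⟩

namespace IsLocallyFiniteRootSystem

variable {Φ : Set V} (hΦ : IsLocallyFiniteRootSystem Φ) {α β γ : V}
include hΦ

lemma ne_zero (hα : α ∈ Φ) : α ≠ 0 :=
  ne_of_mem_of_not_mem hα hΦ.zero_notMem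

lemma neg_mem (hα : α ∈ Φ) : -α ∈ Φ := by
  simpa only [reflRoot_self (hΦ.ne_zero hα)] using hΦ.reflRoot_mem α hα α hα

lemma pairing_eq_neg_one (hα : α ∈ Φ) (hγ : γ ∈ Φ) (hle : ‖α‖ ≤ ‖γ‖) (hne : α + γ ≠ 0)
    (hneg : pairing α γ < 0) : pairing α γ = -1 := by
  obtain ⟨m, hm⟩ := hΦ.exists_pairing_eq_intCast γ hγ α hα
  have hgt := neg_two_lt_pairing (hΦ.ne_zero hγ) hle hne
  rw [hm] at hneg hgt ⊢
  norm_cast at hneg hgt ⊢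
  lia

lemma add_mem_of_inner_neg (hα : α ∈ Φ) (hβ : β ∈ Φ) (hneg : ⟪α, β⟫ < 0) (hne : α + β ≠ 0) :
    α + β ∈ Φ := by
  wlog hle : ‖β‖ ≤ ‖α‖ generalizing α β
  · rw [add_comm] at hne ⊢
    exact this hβ hα (by rwa [real_inner_comm]) hne (le_of_not_ge hle)
  have hpairing : pairing β α = -1 :=
    hΦ.pairing_eq_neg_one hβ hα hle (by rwa [add_comm])
      ((pairing_lt_zero_iff (hΦ.ne_zero hα)).mpr (by rwa [real_inner_comm]))
  rw [← reflRoot_of_pairing_eq_neg_one hpairing]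
  exact hΦ.reflRoot_mem α hα β hβ

lemma pairing_eq_neg_one_of_add_eq_zero (hα : α ∈ Φ) (hβ : β ∈ Φ) (hγ : γ ∈ Φ)
    (hsum : α + β + γ = 0) (hαγ : ‖α‖ ≤ ‖γ‖) (hβγ : ‖β‖ ≤ ‖γ‖) : pairing α γ = -1 := by
  have hγ0 := hΦ.ne_zero hγ
  have hα_add : α + γ ≠ 0 := fun h =>
    hΦ.ne_zero hβ (by linear_combination (norm := module) hsum - h)
  have hβ_add : β + γ ≠ 0 := fun h =>
    hΦ.ne_zero hα (by linear_combination (norm := module) hsum - h)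
  have hpair_sum : pairing α γ + pairing β γ = -2 := by
    rw [← pairing_add, eq_neg_of_add_eq_zero_left hsum, pairing_neg, pairing_self hγ0]
  have hβ_gt := neg_two_lt_pairing hγ0 hβγ hβ_add
  exact hΦ.pairing_eq_neg_one hα hγ hαγ hα_add (by linarith)

lemma exists_pairing_eq_neg_one_of_add_mem (hα : α ∈ Φ) (hβ : β ∈ Φ) (hαβ : α + β ∈ Φ) :
    ∃ γ ∈ Φ, ∃ δ ∈ Φ, pairing δ γ = -1 := by
  obtain ⟨γ, hγ, hsum⟩ : ∃ γ ∈ Φ, α + β + γ = 0 := ⟨_, hΦ.neg_mem hαβ, add_neg_cancel _⟩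
  have hlongest : (‖β‖ ≤ ‖α‖ ∧ ‖γ‖ ≤ ‖α‖) ∨ (‖γ‖ ≤ ‖β‖ ∧ ‖α‖ ≤ ‖β‖) ∨
      (‖α‖ ≤ ‖γ‖ ∧ ‖β‖ ≤ ‖γ‖) := by grind
  rcases hlongest with ⟨hβα, hγα⟩ | ⟨hγβ, hαβ⟩ | ⟨hαγ, hβγ⟩
  · exact ⟨α, hα, β, hβ, hΦ.pairing_eq_neg_one_of_add_eq_zero hβ hγ hα
      (by rw [← hsum]; abel) hβα hγα⟩
  · exact ⟨β, hβ, γ, hγ, hΦ.pairing_eq_neg_one_of_add_eq_zero hγ hα hβ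
      (by rw [← hsum]; abel) hγβ hαβ⟩
  · exact ⟨γ, hγ, α, hα, hΦ.pairing_eq_neg_one_of_add_eq_zero hα hβ hγ hsum hαγ hβγ⟩

lemma inv_two_smul_mem_ndSet (hα : α ∈ divSet Φ) : (2 : ℝ)⁻¹ • α ∈ ndSet Φ := by
  refine ⟨hα.2, fun hdiv => ?_⟩
  obtain ⟨m, hm⟩ := hΦ.exists_pairing_eq_intCast α hα.1 _ hdiv.2
  rw [pairing_smul, pairing_smul, pairing_self (hΦ.ne_zero hα.1)] at hm
  have htwice : (1 : ℝ) = 2 * m := by linarith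
  norm_cast at htwice
  lia

lemma ndSet_nonempty (hne : Φ.Nonempty) : (ndSet Φ).Nonempty := by
  obtain ⟨α, hα⟩ := hne
  by_cases hdiv : α ∈ divSet Φ
  · exact ⟨_, hΦ.inv_two_smul_mem_ndSet hdiv⟩
  · exact ⟨α, hα, hdiv⟩

end IsLocallyFiniteRootSystem

/-- `Λ₀` is the common value of an untwisted extension datum of type `Φ`. The span condition
of an extension datum is not imposed. -/
structure IsUntwistedDatum (Φ : Set V) (Λ₀ : Set Y) : Prop where
  zero_mem : (0 : Y) ∈ Λ₀
  sub_pairing_smul_mem : ∀ α ∈ Φ, ∀ β ∈ Φ, ∀ z ∈ Λ₀, ∀ y ∈ Λ₀, y - pairing β α • z ∈ Λ₀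

lemma IsExtensionDatum.isUntwistedDatum {Φ : Set V} {Λ : V → Set Y} {Λ₀ : Set Y}
    (hΛ : IsExtensionDatum Φ Λ) (hΦ : IsLocallyFiniteRootSystem Φ) (hne : Φ.Nonempty)
    (hU : ∀ α ∈ Φ, Λ α = Λ₀) : IsUntwistedDatum Φ Λ₀ where
  zero_mem := by
    obtain ⟨α, hα⟩ := hΦ.ndSet_nonempty hne
    exact hU α hα.1 ▸ hΛ.2.2.1 α hα
  sub_pairing_smul_mem α hα β hβ z hz y hy := by
    rw [← hU _ (hΦ.reflRoot_mem α hα β hβ)]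
    exact hΛ.1 α hα β hβ z (by rwa [hU α hα]) y (by rwa [hU β hβ])

lemma IsUntwistedDatum.add_mem {Φ : Set V} {Λ₀ : Set Y} (hΛ : IsUntwistedDatum Φ Λ₀)
    (hΦ : IsLocallyFiniteRootSystem Φ) {α β : V} (hα : α ∈ Φ) (hβ : β ∈ Φ) (hαβ : α + β ∈ Φ)
    {y z : Y} (hy : y ∈ Λ₀) (hz : z ∈ Λ₀) : y + z ∈ Λ₀ := by
  obtain ⟨γ, hγ, δ, hδ, hpairing⟩ := hΦ.exists_pairing_eq_neg_one_of_add_mem hα hβ hαβ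
  simpa [hpairing] using hΛ.sub_pairing_smul_mem γ hγ δ hδ z hz y hy

lemma PhiRe_eq_prod {V Y : Type*} {Φ : Set V} {Λ : V → Set Y} {Λ₀ : Set Y}
    (hU : ∀ α ∈ Φ, Λ α = Λ₀) : PhiRe Φ Λ = Φ ×ˢ Λ₀ := by
  ext x
  exact and_congr_right fun hx => by rw [hU _ hx]

lemma Gr_prod {V Y : Type*} (Δ : Set V) {Λ₀ : Set Y} (hne : Λ₀.Nonempty) : Gr (Δ ×ˢ Λ₀) = Δ := by
  ext α
  exact ⟨fun ⟨_, hα, _⟩ => hα, fun hα => hne.imp fun _ hy => ⟨hα, hy⟩⟩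

lemma Zset_reflRoot {Ψ : Set (V × Y)} (hrefl : ∀ a ∈ Ψ, ∀ x ∈ Ψ, reflAff a x ∈ Ψ) {α : V} {y : Y}
    (hα : α ≠ 0) (hy : y ∈ Zset Ψ α) (β : V) :
    Zset Ψ (reflRoot α β) = -(pairing β α • y) +ᵥ Zset Ψ β := by
  have hmem_iff (x : V × Y) : reflAff (α, y) x ∈ Ψ ↔ x ∈ Ψ :=
    ⟨fun hx => reflAff_involutive (a := (α, y)) hα x ▸ hrefl _ hy _ hx, hrefl _ hy x⟩
  ext z
  rw [Set.mem_neg_vadd_set_iff, vadd_eq_add]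
  have h := hmem_iff (β, pairing β α • y + z)
  rwa [reflAff, add_sub_cancel_left] at h

namespace IsClosedSubSys

variable {Φ : Set V} {Λ₀ : Set Y} {Ψ : Set (V × Y)} {α β : V}

lemma Gr_subset (hΨ : IsClosedSubSys (Φ ×ˢ Λ₀) Ψ) : Gr Ψ ⊆ Φ :=
  fun _ ⟨_, hy⟩ => (hΨ.1.2.1 hy).1

section

variable (hΦ : IsLocallyFiniteRootSystem Φ) (hΨ : IsClosedSubSys (Φ ×ˢ Λ₀) Ψ)
include hΦ hΨ

lemma Zset_neg {y : Y} (hy : y ∈ Zset Ψ α) : Zset Ψ (-α) = -((2 : ℝ) • y) +ᵥ Zset Ψ α := by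
  have hα : α ≠ 0 := hΦ.ne_zero (hΨ.Gr_subset ⟨y, hy⟩)
  simpa only [reflRoot_self hα, pairing_self hα] using Zset_reflRoot hΨ.1.2.2.2 hα hy α

lemma neg_mem_Zset_neg {y : Y} (hy : y ∈ Zset Ψ α) : -y ∈ Zset Ψ (-α) := by
  rw [hΨ.Zset_neg hΦ hy]
  exact ⟨y, hy, by simp only [vadd_eq_add]; module⟩

lemma neg_mem_Gr (hα : α ∈ Gr Ψ) : -α ∈ Gr Ψ :=
  hα.imp' Neg.neg fun _ => hΨ.neg_mem_Zset_neg hΦ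

lemma orbit_Zset_neg (hα : α ∈ Gr Ψ) :
    AddAction.orbit Y (Zset Ψ (-α)) = AddAction.orbit Y (Zset Ψ α) := by
  obtain ⟨y, hy⟩ := hα
  rw [hΨ.Zset_neg hΦ hy, AddAction.orbit_vadd]

end

section

variable (hΦ : IsLocallyFiniteRootSystem Φ) (hΛ : IsUntwistedDatum Φ Λ₀)
  (hΨ : IsClosedSubSys (Φ ×ˢ Λ₀) Ψ)
include hΦ hΛ hΨ

lemma add_mem_Zset_add {y z : Y} (hy : y ∈ Zset Ψ α) (hz : z ∈ Zset Ψ β) (hαβ : α + β ∈ Φ) :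
    y + z ∈ Zset Ψ (α + β) := by
  obtain ⟨hα, hyΛ⟩ := hΨ.1.2.1 hy
  obtain ⟨hβ, hzΛ⟩ := hΨ.1.2.1 hz
  exact hΨ.2 _ hy _ hz ⟨hαβ, hΛ.add_mem hΦ hα hβ hαβ hyΛ hzΛ⟩

theorem isClosedSubRS_Gr : IsClosedSubRS Φ (Gr Ψ) := by
  refine ⟨⟨?_, hΨ.Gr_subset, ?_⟩, ?_⟩
  · obtain ⟨⟨α, y⟩, hy⟩ := hΨ.1.1
    exact ⟨α, y, hy⟩
  · rintro α ⟨y, hy⟩ β ⟨z, hz⟩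
    exact ⟨_, hΨ.1.2.2.2 _ hy _ hz⟩
  · rintro α ⟨y, hy⟩ β ⟨z, hz⟩ hαβ
    exact ⟨_, hΨ.add_mem_Zset_add hΦ hΛ hy hz hαβ⟩

lemma Zset_add {y : Y} (hα : α ∈ Φ) (hy : y ∈ Zset Ψ β) (hαβ : α + β ∈ Φ) :
    Zset Ψ (α + β) = y +ᵥ Zset Ψ α := by
  ext z
  rw [Set.mem_vadd_set_iff_neg_vadd_mem, vadd_eq_add, neg_add_eq_sub]
  constructor <;> intro hz
  · simpa [sub_eq_add_neg] using
      hΨ.add_mem_Zset_add hΦ hΛ hz (hΨ.neg_mem_Zset_neg hΦ hy) (by simpa using hα)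
  · simpa using hΨ.add_mem_Zset_add hΦ hΛ hz hy hαβ

lemma orbit_Zset_add (hα : α ∈ Φ) (hβ : β ∈ Gr Ψ) (hαβ : α + β ∈ Φ) :
    AddAction.orbit Y (Zset Ψ (α + β)) = AddAction.orbit Y (Zset Ψ α) := by
  obtain ⟨y, hy⟩ := hβ
  rw [hΨ.Zset_add hΦ hΛ hα hy hαβ, AddAction.orbit_vadd]

lemma orbit_Zset_eq_of_inner_neg (hα : α ∈ Gr Ψ) (hβ : β ∈ Gr Ψ) (hneg : ⟪α, β⟫ < 0) :
    AddAction.orbit Y (Zset Ψ α) = AddAction.orbit Y (Zset Ψ β) := by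
  have hαΦ := hΨ.Gr_subset hα
  have hβΦ := hΨ.Gr_subset hβ
  by_cases hopp : α + β = 0
  · rw [eq_neg_of_add_eq_zero_left hopp, hΨ.orbit_Zset_neg hΦ hβ]
  · have hαβ : α + β ∈ Φ := hΦ.add_mem_of_inner_neg hαΦ hβΦ hneg hopp
    rw [← hΨ.orbit_Zset_add hΦ hΛ hαΦ hβ hαβ, add_comm,
      hΨ.orbit_Zset_add hΦ hΛ hβΦ hα (by rwa [add_comm])]

lemma orbit_Zset_eq_of_inner_ne_zero (hα : α ∈ Gr Ψ) (hβ : β ∈ Gr Ψ) (hne : ⟪α, β⟫ ≠ 0) :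
    AddAction.orbit Y (Zset Ψ α) = AddAction.orbit Y (Zset Ψ β) := by
  rcases hne.lt_or_gt with hneg | hpos
  · exact hΨ.orbit_Zset_eq_of_inner_neg hΦ hΛ hα hβ hneg
  · rw [← hΨ.orbit_Zset_neg hΦ hβ]
    refine hΨ.orbit_Zset_eq_of_inner_neg hΦ hΛ hα (hΨ.neg_mem_Gr hΦ hβ) ?_
    rwa [inner_neg_right, neg_lt_zero]

theorem orbit_Zset_eq_of_sameComp (h : SameComp (Gr Ψ) α β) :
    AddAction.orbit Y (Zset Ψ α) = AddAction.orbit Y (Zset Ψ β) := by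
  induction h with
  | refl => rfl
  | tail _ hstep ih =>
    exact ih.trans (hΨ.orbit_Zset_eq_of_inner_ne_zero hΦ hΛ hstep.1 hstep.2.1 hstep.2.2)

end

end IsClosedSubSys

lemma IsClosedSubRS.isClosedSubSys_prod {Φ Δ : Set V} {Λ₀ : Set Y} (hΔ : IsClosedSubRS Φ Δ)
    (hne : Δ ≠ Φ) (hΛ : IsUntwistedDatum Φ Λ₀) : IsClosedSubSys (Φ ×ˢ Λ₀) (Δ ×ˢ Λ₀) := by
  obtain ⟨⟨hΔ_ne, hΔΦ, hΔ_refl⟩, hΔ_add⟩ := hΔ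
  have hΛ_ne : Λ₀.Nonempty := ⟨0, hΛ.zero_mem⟩
  refine ⟨⟨hΔ_ne.prod hΛ_ne, Set.prod_mono_left hΔΦ, fun heq => hne ?_, ?_⟩, ?_⟩
  · rw [← Gr_prod Δ hΛ_ne, heq, Gr_prod Φ hΛ_ne]
  · rintro ⟨α, y⟩ ⟨hα, hy⟩ ⟨β, z⟩ ⟨hβ, hz⟩
    exact ⟨hΔ_refl α hα β hβ, hΛ.sub_pairing_smul_mem α (hΔΦ hα) β (hΔΦ hβ) y hy z hz⟩
  · exact fun x hx y hy hxy => ⟨hΔ_add _ hx.1 _ hy.1 hxy.1, hxy.2⟩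

theorem IsMaxClosedSubSys.not_Gr_ssubset {Φ Δ : Set V} {Λ₀ : Set Y} {Ψ : Set (V × Y)}
    (hΨ : IsMaxClosedSubSys (Φ ×ˢ Λ₀) Ψ) (hΛ : IsUntwistedDatum Φ Λ₀) (hΔ : IsClosedSubRS Φ Δ)
    (hne : Δ ≠ Φ) : ¬ Gr Ψ ⊂ Δ := by
  intro hss
  have hsub : Ψ ⊆ Δ ×ˢ Λ₀ := fun x hx => ⟨hss.subset ⟨x.2, hx⟩, (hΨ.1.1.2.1 hx).2⟩
  have hΨ_eq : Δ ×ˢ Λ₀ = Ψ := hΨ.2 _ (hΔ.isClosedSubSys_prod hne hΛ) hsub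
  rw [← hΨ_eq, Gr_prod Δ ⟨0, hΛ.zero_mem⟩] at hss
  exact ssubset_irrefl Δ hss

theorem statement5_general {Φ : Set V} (hΦ : IsLocallyFiniteRootSystem Φ) {Λ₀ : Set Y}
    (hΛ : IsUntwistedDatum Φ Λ₀) {Ψ : Set (V × Y)} (hΨ : IsClosedSubSys (Φ ×ˢ Λ₀) Ψ) :
    IsClosedSubRS Φ (Gr Ψ) ∧
    (∀ α ∈ Gr Ψ, ∀ β ∈ Gr Ψ, SameComp (Gr Ψ) α β →
      ∃ v : Y, Zset Ψ α = (fun y => v + y) '' Zset Ψ β) ∧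
    (IsMaxClosedSubSys (Φ ×ˢ Λ₀) Ψ →
      ∀ Δ : Set V, IsClosedSubRS Φ Δ → Δ ≠ Φ → ¬ Gr Ψ ⊂ Δ) := by
  refine ⟨hΨ.isClosedSubRS_Gr hΦ hΛ, fun α _ β _ hcomp => ?_,
    fun hmax Δ hΔ hne => hmax.not_Gr_ssubset hΛ hΔ hne⟩
  obtain ⟨v, hv⟩ := AddAction.orbit_eq_iff.mp (hΨ.orbit_Zset_eq_of_sameComp hΦ hΛ hcomp)
  exact ⟨v, hv.symm⟩

/-- Lemma 3.4: for an untwisted irreducible affine reflection system, gradients of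
closed subroot systems are closed, the `Z_α` on an irreducible component agree up to
translation, and gradients of maximal closed subroot systems are not properly
contained in proper closed subroot systems. -/
theorem statement5 {V Y : Type*} [NormedAddCommGroup V] [InnerProductSpace ℝ V]
    [AddCommGroup Y] [Module ℝ Y] [FiniteDimensional ℝ V] [FiniteDimensional ℝ Y]
    (Φ : Set V) (hΦ : IsRootSystem Φ) (hirr : IsIrreducible Φ)
    (Λ : V → Set Y) (hΛ : IsExtensionDatum Φ Λ)
    (Λ₀ : Set Y) (hU : ∀ α ∈ Φ, Λ α = Λ₀)
    (Ψ : Set (V × Y)) (hΨ : IsClosedSubSys (PhiRe Φ Λ) Ψ) :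
    IsClosedSubRS Φ (Gr Ψ) ∧
    (∀ α ∈ Gr Ψ, ∀ β ∈ Gr Ψ, SameComp (Gr Ψ) α β →
      ∃ v : Y, Zset Ψ α = (fun y => v + y) '' Zset Ψ β) ∧
    (IsMaxClosedSubSys (PhiRe Φ Λ) Ψ →
      ∀ Δ : Set V, IsClosedSubRS Φ Δ → Δ ≠ Φ → ¬ Gr Ψ ⊂ Δ) := by
  have hΦ_loc := hΦ.isLocallyFiniteRootSystem
  rw [PhiRe_eq_prod hU] at hΨ ⊢
  exact statement5_general hΦ_loc
    (hΛ.isUntwistedDatum hΦ_loc (hΨ.1.1.mono hΨ.1.2.1).fst hU) hΨ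

end BdS
end
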